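/- Let S = (S, I, O, G, D, h) be a weakly-complete deterministic TFSM with output delays all of whose guards are half-open intervals [u,v) with integers 0 ≤ u < v, and let α be a non-integer timed input sequence whose untimed projection [α]_{I_G} is defined. Then α is a homing sequence for S if and only if [α]_{I_G} is a homing sequence for the region FSM R(S). -/

import Mathlib

/-!
Write `γ` for the untimed output word of a run, i.e. the list of pairs (output, delay) of its
transitions.  A refined guard `g` has no boundary point in its interior, so a half-open guard of a
transition that meets `g` contains it (`guardSub_of_mem`).  Hence the runs of the TFSM on `α` and
the runs of the region FSM on the projection of `α` correspond, with the same end states and with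
output words `γ` (`exists_fRunTo`, `exists_tRunTo`).

The timed outputs of a run are a function of `α` and `γ` alone (`timedWord`).  Conversely, if two
output words give the same timed outputs up to reordering, then an output produced at step `j` of
one run and at step `k` of the other satisfies `t_j + d_j = t_k + d'_k`, so `t_j - t_k` is an
integer and `j = k`; thus the two words agree (`eq_of_perm_timedWord`).  It follows that two states
have equal `timedOut` iff they have equal `FOut`, and the two homing conditions coincide.
-/

/-- A timed guard: an interval with natural-number endpoints, left-closed, and
either right-open (`rightClosed = false`, i.e. `[lo, hi)`) or right-closed
(`rightClosed = true`, i.e. `[lo, hi]`; point intervals are `[u,u]`). -/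
structure Guard where
  lo : ℕ
  hi : ℕ
  rightClosed : Bool
deriving DecidableEq

/-- Membership of a timestamp in a guard. -/
def GuardMem (g : Guard) (t : ℝ) : Prop :=
  (g.lo : ℝ) ≤ t ∧ (if g.rightClosed then t ≤ (g.hi : ℝ) else t < (g.hi : ℝ))

/-- Guard inclusion (as sets of timestamps). -/
def GuardSub (g g' : Guard) : Prop := ∀ t : ℝ, GuardMem g t → GuardMem g' t

/-- A transition of a TFSM with output delays: source state, input, timed guard,
output, positive integer output delay, destination state. -/
structure TTrans (S I O : Type) where
  src : S
  inp : I
  guard : Guard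
  out : O
  delay : ℕ+
  dst : S

/-- A TFSM with output delays over states `S`, inputs `I`, outputs `O`,
given by its transition relation. -/
abbrev TFSM (S I O : Type) := Set (TTrans S I O)

variable {S I O A B : Type}

/-- Determinism: any two distinct transitions from the same state on the same input
have disjoint guards. -/
def TFSMDeterministic (M : TFSM S I O) : Prop :=
  ∀ tr ∈ M, ∀ tr' ∈ M, tr.src = tr'.src → tr.inp = tr'.inp → tr ≠ tr' →
    ∀ t : ℝ, ¬ (GuardMem tr.guard t ∧ GuardMem tr'.guard t)

/-- A timed input sequence: nonnegative, nondecreasing timestamps. -/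
def IsTimedInputSeq (α : List (I × ℝ)) : Prop :=
  (∀ p ∈ α, 0 ≤ p.2) ∧ List.Chain' (· ≤ ·) (α.map Prod.snd)

/-- `TRunTo M s t0 α trs sf`: starting at state `s` at time `t0`, the timed input
sequence `α` induces the sequence of transitions `trs`, ending at state `sf`. -/
inductive TRunTo (M : TFSM S I O) : S → ℝ → List (I × ℝ) → List (TTrans S I O) → S → Prop
  | nil (s : S) (t0 : ℝ) : TRunTo M s t0 [] [] s
  | cons {s sf : S} {t0 t : ℝ} {i : I} {tr : TTrans S I O}
      {rest : List (I × ℝ)} {trs : List (TTrans S I O)} :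
      tr ∈ M → tr.src = s → tr.inp = i → GuardMem tr.guard (t - t0) →
      TRunTo M tr.dst t rest trs sf →
      TRunTo M s t0 ((i, t) :: rest) (tr :: trs) sf

/-- `α` induces the sequence of transitions `trs` from state `s`. -/
def TInduces (M : TFSM S I O) (s : S) (α : List (I × ℝ)) (trs : List (TTrans S I O)) : Prop :=
  ∃ sf : S, TRunTo M s 0 α trs sf

/-- `Dom(s)`: the timed input sequences inducing at least one sequence of transitions from `s`. -/
def TDom (M : TFSM S I O) (s : S) : Set (List (I × ℝ)) :=
  { α | IsTimedInputSeq α ∧ ∃ trs, TInduces M s α trs }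

/-- `next_state(s, α) = sf` (as a relation, since `next_state` is partial). -/
def TReaches (M : TFSM S I O) (s : S) (α : List (I × ℝ)) (sf : S) : Prop :=
  ∃ trs, TRunTo M s 0 α trs sf

/-- The timed outputs of a run: the `j`-th transition produces its output at time
`t_j + d_j`. -/
def rawOutputs (α : List (I × ℝ)) (trs : List (TTrans S I O)) : List (O × ℝ) :=
  List.zipWith (fun p tr => (tr.out, p.2 + ((tr.delay : ℕ) : ℝ))) α trs

/-- `timed_out(s, α)`: all time-sorted reorderings of the timed outputs of the run of `α` at `s`. -/
def timedOut (M : TFSM S I O) (s : S) (α : List (I × ℝ)) : Set (List (O × ℝ)) :=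
  { β | ∃ trs sf, TRunTo M s 0 α trs sf ∧ List.Perm β (rawOutputs α trs) ∧
        List.Chain' (· ≤ ·) (β.map Prod.snd) }

/-- Homing sequence for a TFSM with output delays. -/
def THoming (M : TFSM S I O) (α : List (I × ℝ)) : Prop :=
  IsTimedInputSeq α ∧ ∀ s1 s2 : S, timedOut M s1 α = timedOut M s2 α →
    ∃ sf : S, TReaches M s1 α sf ∧ TReaches M s2 α sf

/-- Synchronizing sequence for a TFSM with output delays. -/
def TSync (M : TFSM S I O) (α : List (I × ℝ)) : Prop :=
  IsTimedInputSeq α ∧ ∃ sf : S, ∀ s : S, TReaches M s α sf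

/-- A timed input sequence is non-integer if the difference of any two distinct
timestamps is not an integer. -/
def NonInteger (α : List (I × ℝ)) : Prop :=
  ∀ j k : Fin α.length, j ≠ k → ∀ z : ℤ, (α.get j).2 - (α.get k).2 ≠ (z : ℝ)

/-- A transition of an (untimed) FSM. -/
structure FTrans (S A B : Type) where
  src : S
  inp : A
  out : B
  dst : S

/-- An (untimed) FSM given by its transition relation. -/
abbrev UntimedFSM (S A B : Type) := Set (FTrans S A B)

/-- FSM run: input sequence, produced output sequence, final state. -/
inductive FRunTo (T : UntimedFSM S A B) : S → List A → List B → S → Prop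
  | nil (s : S) : FRunTo T s [] [] s
  | cons {s sf : S} {a : A} {rest : List A} {γ : List B} {f : FTrans S A B} :
      f ∈ T → f.src = s → f.inp = a → FRunTo T f.dst rest γ sf →
      FRunTo T s (a :: rest) (f.out :: γ) sf

def FReaches (T : UntimedFSM S A B) (s : S) (β : List A) (sf : S) : Prop :=
  ∃ γ, FRunTo T s β γ sf

/-- `out(s, β)` for an FSM (a set, i.e. a partial value, since the FSM may be partial). -/
def FOut (T : UntimedFSM S A B) (s : S) (β : List A) : Set (List B) :=
  { γ | ∃ sf, FRunTo T s β γ sf }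

def FDeterministic (T : UntimedFSM S A B) : Prop :=
  ∀ f ∈ T, ∀ f' ∈ T, f.src = f'.src → f.inp = f'.inp → f = f'

/-- Completeness of an FSM relative to an input alphabet `A0`. -/
def FCompleteOn (T : UntimedFSM S A B) (A0 : Set A) : Prop :=
  ∀ s : S, ∀ a ∈ A0, ∃ f ∈ T, f.src = s ∧ f.inp = a

/-- Synchronizing sequence for an FSM. -/
def FSync (T : UntimedFSM S A B) (β : List A) : Prop :=
  ∃ sf : S, ∀ s : S, FReaches T s β sf

/-- Homing sequence for an FSM. -/
def FHoming (T : UntimedFSM S A B) (β : List A) : Prop :=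
  ∀ s1 s2 : S, FOut T s1 β = FOut T s2 β →
    ∃ sf : S, FReaches T s1 β sf ∧ FReaches T s2 β sf

/-- The guards appearing on transitions labeled with input `i`. -/
def guardsOf (M : TFSM S I O) (i : I) : Set Guard :=
  { g | ∃ tr ∈ M, tr.inp = i ∧ tr.guard = g }

/-- Boundary points of the guards labeled `i`. -/
def boundaries (M : TFSM S I O) (i : I) : Set ℕ :=
  { p | ∃ g ∈ guardsOf M i, g.lo = p ∨ g.hi = p }

/-- `Ḡ_i`: the half-open intervals determined by consecutive boundary points of `G_i`. -/
def refinedGuards (M : TFSM S I O) (i : I) : Set Guard :=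
  { g | g.rightClosed = false ∧ g.lo ∈ boundaries M i ∧ g.hi ∈ boundaries M i ∧
        g.lo < g.hi ∧ ∀ r ∈ boundaries M i, ¬ (g.lo < r ∧ r < g.hi) }

/-- The abstract input alphabet `I_G = {(i, g) : g ∈ Ḡ_i}`. -/
def absInputs (M : TFSM S I O) : Set (I × Guard) :=
  { p | p.2 ∈ refinedGuards M p.1 }

/-- The region FSM `R(S)` of a TFSM with output delays. -/
def regionFSM (M : TFSM S I O) : UntimedFSM S (I × Guard) (O × ℕ+) :=
  { f | f.inp ∈ absInputs M ∧ ∃ tr ∈ M, tr.src = f.src ∧ tr.inp = f.inp.1 ∧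
        tr.out = f.out.1 ∧ tr.delay = f.out.2 ∧ tr.dst = f.dst ∧ GuardSub f.inp.2 tr.guard }

/-- All guards are half-open intervals `[u, v)` with `u < v`. -/
def HalfOpenGuards (M : TFSM S I O) : Prop :=
  ∀ tr ∈ M, tr.guard.rightClosed = false ∧ tr.guard.lo < tr.guard.hi

/-- Weak completeness: all states have the same domain. -/
def WeaklyComplete (M : TFSM S I O) : Prop :=
  ∀ s s' : S, TDom M s = TDom M s'

/-- `Projects M t0 α β`: `β` is the untimed projection `[α]_{I_G}` of `α`
(relative to previous timestamp `t0`). -/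
inductive Projects (M : TFSM S I O) : ℝ → List (I × ℝ) → List (I × Guard) → Prop
  | nil (t0 : ℝ) : Projects M t0 [] []
  | cons {t0 t : ℝ} {i : I} {g : Guard} {rest : List (I × ℝ)} {brest : List (I × Guard)} :
      g ∈ refinedGuards M i → GuardMem g (t - t0) →
      Projects M t rest brest →
      Projects M t0 ((i, t) :: rest) ((i, g) :: brest)

/-- All guards are point intervals `[u, u]` with `u` a positive integer. -/
def PointIntervals (M : TFSM S I O) : Prop :=
  ∀ tr ∈ M, tr.guard.rightClosed = true ∧ tr.guard.lo = tr.guard.hi ∧ 0 < tr.guard.lo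

/-- The region FSM of a TFSM with only point intervals: abstract inputs are the
(input, guard) pairs appearing on transitions. -/
def pointRegionFSM (M : TFSM S I O) : UntimedFSM S (I × Guard) (O × ℕ+) :=
  { f | ∃ tr ∈ M, tr.src = f.src ∧ (tr.inp, tr.guard) = f.inp ∧
        (tr.out, tr.delay) = f.out ∧ tr.dst = f.dst }

/-- `t(α)`: the last timestamp of `α` (0 for the empty sequence). -/
def tEnd (α : List (I × ℝ)) : ℝ := (α.map Prod.snd).getLastD 0

/-- The number of timed outputs of the run produced at or after time `t(α)`
(counted with multiplicity). -/
noncomputable def tailCount (α : List (I × ℝ)) (trs : List (TTrans S I O)) : ℕ :=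
  ((rawOutputs α trs).filter (fun p => decide (tEnd α ≤ p.2))).length

/-- The timed output tail of a run: the multiset of `(o, τ - t(α))` over timed
outputs `(o, τ)` of the run with `τ ≥ t(α)`. -/
noncomputable def tailOf (α : List (I × ℝ)) (trs : List (TTrans S I O)) : Multiset (O × ℝ) :=
  ↑(((rawOutputs α trs).filter (fun p => decide (tEnd α ≤ p.2))).map
      (fun p => (p.1, p.2 - tEnd α)))

/-- The set of all timed output tails of the TFSM, together with the empty tail. -/
def Tout (M : TFSM S I O) : Set (Multiset (O × ℝ)) :=
  insert 0 { m | ∃ (s : S) (α : List (I × ℝ)) (trs : List (TTrans S I O)) (sf : S),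
    α ∈ TDom M s ∧ TRunTo M s 0 α trs sf ∧ m = tailOf α trs }

/-- The output delay at state `j` of the machine `B_n`. -/
def BnDelay (n : ℕ) (j : Fin n) : ℕ+ :=
  if (j : ℕ) = n - 2 then 3 else if (j : ℕ) = n - 1 then 1 else 2

/-- The transition of `B_n` out of state `j`. -/
def BnTrans (n : ℕ) [NeZero n] (j : Fin n) : TTrans (Fin n) Unit Unit :=
  ⟨j, (), ⟨1, 1, true⟩, (), BnDelay n j, j + 1⟩

/-- The TFSM `B_n` with only point intervals. -/
def Bn (n : ℕ) [NeZero n] : TFSM (Fin n) Unit Unit := Set.range (BnTrans n)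

/-- A half-open transition guard that contains a point of a refined guard contains that whole
refined guard. -/
theorem guardSub_of_mem {M : TFSM S I O} (hho : HalfOpenGuards M) {tr : TTrans S I O}
    (htr : tr ∈ M) {g : Guard} (hg : g ∈ refinedGuards M tr.inp) {x : ℝ}
    (hx : GuardMem tr.guard x) (hgx : GuardMem g x) : GuardSub g tr.guard := by
  obtain ⟨hrc, -, -, -, hno⟩ := hg
  obtain ⟨hrc', -⟩ := hho tr htr
  simp only [GuardMem, hrc, hrc', Bool.false_eq_true, if_false] at hx hgx
  have hlo := hno tr.guard.lo ⟨tr.guard, ⟨tr, htr, rfl, rfl⟩, Or.inl rfl⟩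
  have hhi := hno tr.guard.hi ⟨tr.guard, ⟨tr, htr, rfl, rfl⟩, Or.inr rfl⟩
  have h1 : tr.guard.lo < g.hi := by exact_mod_cast hx.1.trans_lt hgx.2
  have h2 : g.lo < tr.guard.hi := by exact_mod_cast hgx.1.trans_lt hx.2
  have h3 : (tr.guard.lo : ℝ) ≤ g.lo := by
    exact_mod_cast (show tr.guard.lo ≤ g.lo by by_contra h; exact hlo ⟨by omega, h1⟩)
  have h4 : (g.hi : ℝ) ≤ tr.guard.hi := by
    exact_mod_cast (show g.hi ≤ tr.guard.hi by by_contra h; exact hhi ⟨h2, by omega⟩)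
  intro t ht
  simp only [GuardMem, hrc, hrc', Bool.false_eq_true, if_false] at ht ⊢
  exact ⟨h3.trans ht.1, ht.2.trans_le h4⟩

/-- The untimed output word of a sequence of transitions. -/
def outWord (trs : List (TTrans S I O)) : List (O × ℕ+) :=
  trs.map fun tr => (tr.out, tr.delay)

/-- The timed outputs, in order of the inputs, determined by the timed inputs `α` and the untimed
output word `γ`. -/
noncomputable def timedWord (α : List (I × ℝ)) (γ : List (O × ℕ+)) : List (O × ℝ) :=
  List.zipWith (fun p c => (c.1, p.2 + ((c.2 : ℕ) : ℝ))) α γ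

theorem rawOutputs_eq (α : List (I × ℝ)) (trs : List (TTrans S I O)) :
    rawOutputs α trs = timedWord α (outWord trs) := by
  simp [rawOutputs, timedWord, outWord, List.zipWith_map_right]

/-- A run of the TFSM on `α` is also a run of the region FSM on the projection of `α`, with the
same end state and the untimed output word of the run. -/
theorem exists_fRunTo {M : TFSM S I O} (hho : HalfOpenGuards M) {s sf : S} {t0 : ℝ}
    {α : List (I × ℝ)} {β : List (I × Guard)} {trs : List (TTrans S I O)}
    (hproj : Projects M t0 α β) (h : TRunTo M s t0 α trs sf) :
    FRunTo (regionFSM M) s β (outWord trs) sf := by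
  induction h generalizing β with
  | nil s t0 => cases hproj; exact .nil s
  | @cons s sf t0 t i tr rest trs htr hs hi hmem _ ih =>
    cases hproj with
    | @cons _ _ _ g _ brest hg hgm hrest =>
      subst hi
      exact FRunTo.cons (f := ⟨s, (tr.inp, g), (tr.out, tr.delay), tr.dst⟩)
        ⟨hg, tr, htr, hs, rfl, rfl, rfl, rfl, guardSub_of_mem hho htr hg hmem hgm⟩
        rfl rfl (ih hrest)

/-- Every run of the region FSM on the projection of `α` lifts to a run of the TFSM on `α`. -/
theorem exists_tRunTo {M : TFSM S I O} {s sf : S} {t0 : ℝ}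
    {α : List (I × ℝ)} {β : List (I × Guard)} {γ : List (O × ℕ+)}
    (hproj : Projects M t0 α β) (h : FRunTo (regionFSM M) s β γ sf) :
    ∃ trs, TRunTo M s t0 α trs sf ∧ outWord trs = γ := by
  induction h generalizing t0 α with
  | nil s => cases hproj; exact ⟨[], .nil s t0, rfl⟩
  | @cons s sf a rest γ f hf hs ha _ ih =>
    cases hproj with
    | @cons _ t i g rest' _ hg hgm hrest =>
      obtain ⟨trs, hrun, rfl⟩ := ih hrest
      obtain ⟨-, tr, htr, h1, h2, h3, h4, h5, h6⟩ := hf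
      rw [ha] at h2 h6
      rw [← h5] at hrun
      exact ⟨tr :: trs, .cons htr (h1.trans hs) h2 (h6 _ hgm) hrun,
        by simp [outWord, h3, h4]⟩

theorem TRunTo.length_eq {M : TFSM S I O} {s sf : S} {t0 : ℝ} {α : List (I × ℝ)}
    {trs : List (TTrans S I O)} (h : TRunTo M s t0 α trs sf) :
    (outWord trs).length = α.length := by
  rw [outWord, List.length_map]
  induction h with
  | nil => rfl
  | cons _ _ _ _ _ ih => simp [ih]

theorem tReaches_iff {M : TFSM S I O} (hho : HalfOpenGuards M) {α : List (I × ℝ)}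
    {β : List (I × Guard)} (hproj : Projects M 0 α β) (s sf : S) :
    TReaches M s α sf ↔ FReaches (regionFSM M) s β sf := by
  constructor
  · rintro ⟨trs, h⟩
    exact ⟨_, exists_fRunTo hho hproj h⟩
  · rintro ⟨γ, h⟩
    obtain ⟨trs, h', -⟩ := exists_tRunTo hproj h
    exact ⟨trs, h'⟩

/-- For a non-integer sequence, the timed outputs, even without their order, determine the
untimed output word. -/
theorem eq_of_perm_timedWord {α : List (I × ℝ)} (hni : NonInteger α) {γ γ' : List (O × ℕ+)}
    (hl : γ.length = α.length) (hl' : γ'.length = α.length)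
    (hp : (timedWord α γ).Perm (timedWord α γ')) : γ = γ' := by
  refine List.ext_getElem (hl.trans hl'.symm) fun j hj hj' => ?_
  have hjl : j < (timedWord α γ).length := by simp [timedWord]; omega
  obtain ⟨k, hk, he⟩ := List.mem_iff_getElem.1 (hp.mem_iff.1 (List.getElem_mem hjl))
  have hkα : k < α.length := by simp [timedWord] at hk; omega
  have hjα : j < α.length := by omega
  have hkγ : k < γ'.length := by omega
  simp only [timedWord, List.getElem_zipWith, Prod.mk.injEq] at he
  obtain ⟨ho, ht⟩ := he
  -- The outputs at steps `j` and `k` occur at the same time, and delays are integers.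
  have hjk : j = k := by
    by_contra hne
    refine hni ⟨j, hjα⟩ ⟨k, hkα⟩ (by simpa using hne)
      (((γ'[k].2 : ℕ) : ℤ) - ((γ[j].2 : ℕ) : ℤ)) ?_
    simp only [List.get_eq_getElem]
    push_cast
    linarith
  subst hjk
  have hd : ((γ'[j].2 : ℕ) : ℝ) = ((γ[j].2 : ℕ) : ℝ) := by linarith
  exact Prod.ext ho.symm (PNat.eq (by exact_mod_cast hd.symm))

theorem exists_sorted_perm (l : List (O × ℝ)) :
    ∃ b : List (O × ℝ), b.Perm l ∧ List.IsChain (· ≤ ·) (b.map Prod.snd) := by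
  classical
  let r : O × ℝ → O × ℝ → Prop := fun a b => a.2 ≤ b.2
  haveI : Std.Total r := ⟨fun a b => le_total a.2 b.2⟩
  haveI : IsTrans (O × ℝ) r := ⟨fun _ _ _ h h' => le_trans h h'⟩
  refine ⟨l.insertionSort r, l.perm_insertionSort r, ?_⟩
  exact List.Pairwise.isChain (List.pairwise_map.2 (l.pairwise_insertionSort r))

/-- Any sorted reordering of the timed outputs of one run at `s1` comes from a run at `s2`, and
the two runs then have the same untimed output word. -/
theorem fOut_subset {M : TFSM S I O} (hho : HalfOpenGuards M) {α : List (I × ℝ)}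
    (hni : NonInteger α) {β : List (I × Guard)} (hproj : Projects M 0 α β) {s1 s2 : S}
    (h : timedOut M s1 α ⊆ timedOut M s2 α) :
    FOut (regionFSM M) s1 β ⊆ FOut (regionFSM M) s2 β := by
  rintro γ ⟨sf, hγ⟩
  obtain ⟨trs, hrun, rfl⟩ := exists_tRunTo hproj hγ
  obtain ⟨b, hb, hs⟩ := exists_sorted_perm (rawOutputs α trs)
  obtain ⟨trs', sf', hrun', hb', -⟩ := h ⟨trs, sf, hrun, hb, hs⟩
  have hp := hb.symm.trans hb'
  rw [rawOutputs_eq, rawOutputs_eq] at hp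
  rw [eq_of_perm_timedWord hni hrun.length_eq hrun'.length_eq hp]
  exact ⟨sf', exists_fRunTo hho hproj hrun'⟩

theorem timedOut_subset {M : TFSM S I O} (hho : HalfOpenGuards M) {α : List (I × ℝ)}
    {β : List (I × Guard)} (hproj : Projects M 0 α β) {s1 s2 : S}
    (h : FOut (regionFSM M) s1 β ⊆ FOut (regionFSM M) s2 β) :
    timedOut M s1 α ⊆ timedOut M s2 α := by
  rintro b ⟨trs, sf, hrun, hb, hs⟩
  obtain ⟨sf', hγ⟩ := h ⟨sf, exists_fRunTo hho hproj hrun⟩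
  obtain ⟨trs', hrun', he⟩ := exists_tRunTo hproj hγ
  refine ⟨trs', sf', hrun', ?_, hs⟩
  rwa [rawOutputs_eq, he, ← rawOutputs_eq]

/-- for a weakly-complete deterministic TFSM with half-open guards and a
non-integer timed input sequence `α` whose untimed projection `β = [α]_{I_G}` is
defined, `α` is homing for the TFSM iff `β` is homing for the region FSM. -/
theorem stmt12 {S I O : Type} [Fintype S] [Nonempty S] [Fintype I] [Nonempty I]
    [Fintype O] [Nonempty O]
    (M : TFSM S I O) (hfin : Set.Finite M) (hdet : TFSMDeterministic M)
    (hwc : WeaklyComplete M) (hho : HalfOpenGuards M)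
    (α : List (I × ℝ)) (hα : IsTimedInputSeq α) (hni : NonInteger α)
    (β : List (I × Guard)) (hproj : Projects M 0 α β) :
    THoming M α ↔ FHoming (regionFSM M) β := by
  have hout : ∀ s1 s2 : S, timedOut M s1 α = timedOut M s2 α ↔
      FOut (regionFSM M) s1 β = FOut (regionFSM M) s2 β := fun s1 s2 =>
    ⟨fun h => (fOut_subset hho hni hproj h.subset).antisymm
        (fOut_subset hho hni hproj h.symm.subset),
      fun h => (timedOut_subset hho hproj h.subset).antisymm
        (timedOut_subset hho hproj h.symm.subset)⟩
  simp only [THoming, FHoming, hα, true_and, hout, tReaches_iff hho hproj]
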